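/- Let η = (η₁, η₂) ∈ ℝ² with η ≠ 0, write r = |η|, and let γ ∈ ℝ. Suppose u : ℝ → ℂ³ and p : ℝ → ℂ are infinitely differentiable and satisfy, for all t > 0: uⱼ''''(t) − 2r² uⱼ''(t) + r⁴ uⱼ(t) + i ηⱼ p(t) = 0 for j = 1,2; u₃''''(t) − 2r² u₃''(t) + r⁴ u₃(t) + p'(t) = 0; and u₃'(t) + i η₁ u₁(t) + i η₂ u₂(t) = 0. Suppose further that the boundary conditions hold: u₁(0) = u₂(0) = u₃(0) = 0, u₂''(0) − i η₂ u₃'(0) + γ η₁ (η₂ u₁(0) − η₁ u₂(0)) = 0, and u₁''(0) − i η₁ u₃'(0) + γ η₂ (η₂ u₁(0) − η₁ u₂(0)) = 0. If in addition u(t) → 0 and p(t) → 0 as t → +∞, then u(t) = 0 and p(t) = 0 for all t ≥ 0. -/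

import Mathlib

open Filter

/-- Quadratic polynomial times an exponential. -/
noncomputable def qexp (k a b c : ℂ) (t : ℝ) : ℂ :=
  (a + b * (t : ℂ) + c * (t : ℂ) ^ 2) * Complex.exp (k * (t : ℂ))

lemma hasDerivAt_cexp_real (k : ℂ) (t : ℝ) :
    HasDerivAt (fun s : ℝ => Complex.exp (k * (s : ℂ))) (k * Complex.exp (k * (t : ℂ))) t := by
  have h1 : HasDerivAt (fun s : ℝ => (s : ℂ)) 1 t := Complex.ofRealCLM.hasDerivAt
  have h2 := (h1.const_mul k).cexp
  convert h2 using 1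
  ring

lemma hasDerivAt_qexp (k a b c : ℂ) (t : ℝ) :
    HasDerivAt (qexp k a b c) (qexp k (b + k * a) (2 * c + k * b) (k * c) t) t := by
  have h1 : HasDerivAt (fun s : ℝ => (s : ℂ)) 1 t := Complex.ofRealCLM.hasDerivAt
  have h2 := (((h1.const_mul b).const_add a).add ((h1.pow 2).const_mul c)).mul
    (hasDerivAt_cexp_real k t)
  refine h2.congr_deriv ?_
  simp [qexp]
  ring

lemma deriv_zero_pos {G G' : ℝ → ℂ} (hG : ∀ t, HasDerivAt G (G' t) t)
    (h0 : ∀ t, 0 < t → G t = 0) : ∀ t, 0 < t → G' t = 0 := by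
  intro t ht
  have he : G =ᶠ[nhds t] fun _ => (0 : ℂ) := by
    filter_upwards [lt_mem_nhds ht] with s hs using h0 s hs
  exact (hG t).unique ((hasDerivAt_const t (0 : ℂ)).congr_of_eventuallyEq he)

lemma zero_at_zero {G : ℝ → ℂ} (hG : Continuous G)
    (h0 : ∀ t, 0 < t → G t = 0) : G 0 = 0 := by
  have h1 : Tendsto G (nhdsWithin 0 (Set.Ioi 0)) (nhds (G 0)) :=
    (hG.tendsto 0).mono_left nhdsWithin_le_nhds
  have h2 : Tendsto G (nhdsWithin 0 (Set.Ioi 0)) (nhds 0) := by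
    refine tendsto_const_nhds.congr' ?_
    filter_upwards [self_mem_nhdsWithin] with s hs using (h0 s hs).symm
  exact tendsto_nhds_unique h1 h2

lemma const_of_deriv {G G' : ℝ → ℂ} (hG : ∀ t, HasDerivAt G (G' t) t)
    (h0 : ∀ t, 0 < t → G' t = 0) : ∃ c, ∀ t, 0 < t → G t = c := by
  refine ⟨G 1, fun t ht => ?_⟩
  refine (convex_Ioi (0 : ℝ)).is_const_of_fderivWithin_eq_zero (𝕜 := ℝ)
    (fun s _ => (hG s).differentiableAt.differentiableWithinAt) ?_ ht (Set.mem_Ioi.2 one_pos)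
  intro s hs
  have h1 := (hG s).hasFDerivAt.hasFDerivWithinAt (s := Set.Ioi (0:ℝ))
  rw [h1.fderivWithin (isOpen_Ioi.uniqueDiffWithinAt hs), h0 s hs]
  ext; simp

lemma quad_of_deriv {G0 G1 G2 G3 : ℝ → ℂ} (h0 : ∀ t, HasDerivAt G0 (G1 t) t)
    (h1 : ∀ t, HasDerivAt G1 (G2 t) t) (h2 : ∀ t, HasDerivAt G2 (G3 t) t)
    (hz : ∀ t, 0 < t → G3 t = 0) :
    ∃ a b c : ℂ, ∀ t : ℝ, 0 < t → G0 t = a + b * (t : ℂ) + c * (t : ℂ) ^ 2 := by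
  have hid : ∀ t : ℝ, HasDerivAt (fun s : ℝ => (s : ℂ)) 1 t :=
    fun t => Complex.ofRealCLM.hasDerivAt
  obtain ⟨c, hc⟩ := const_of_deriv h2 hz
  obtain ⟨b, hb⟩ := const_of_deriv (G := fun t => G1 t - c * (t : ℂ)) (G' := fun t => G2 t - c * 1)
    (fun t => (h1 t).sub ((hid t).const_mul c)) (fun t ht => by simp [hc t ht])
  obtain ⟨a, ha⟩ := const_of_deriv (G := fun t => G0 t - b * (t : ℂ) - c / 2 * (t : ℂ) ^ 2)
    (G' := fun t => G1 t - b * 1 - c / 2 * (((2 : ℕ) : ℂ) * (t : ℂ) ^ (2 - 1) * 1))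
    (fun t => ((h0 t).sub ((hid t).const_mul b)).sub (((hid t).pow 2).const_mul (c / 2)))
    (fun t ht => by
      have := hb t ht
      rw [← this]; push_cast; ring)
  refine ⟨a, b, c / 2, fun t ht => ?_⟩
  have := ha t ht
  rw [← this]; ring

lemma quad_zero_of_tendsto {a b c : ℂ}
    (h : Tendsto (fun t : ℝ => a + b * (t : ℂ) + c * (t : ℂ) ^ 2) atTop (nhds 0)) :
    a = 0 ∧ b = 0 ∧ c = 0 := by
  have sh : ∀ (x : ℝ), Tendsto (fun t : ℝ => t + x) atTop atTop :=
    fun x => tendsto_atTop_add_const_right _ _ tendsto_id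
  have hc : c = 0 := by
    have h1 := ((h.comp (sh 2)).sub ((h.comp (sh 1)).const_mul 2)).add h
    have h2 : Tendsto (fun _ : ℝ => 2 * c) atTop (nhds 0) := by
      convert h1 using 2
      · simp only [Function.comp]; push_cast; ring
      · simp
    simpa using tendsto_nhds_unique tendsto_const_nhds h2
  subst hc
  have hb : b = 0 := by
    have h1 := (h.comp (sh 1)).sub h
    have h2 : Tendsto (fun _ : ℝ => b) atTop (nhds 0) := by
      convert h1 using 2
      · simp only [Function.comp]; push_cast; ring
      · simp
    exact tendsto_nhds_unique tendsto_const_nhds h2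
  subst hb
  refine ⟨?_, rfl, rfl⟩
  exact by simpa using h

lemma qexp_tendsto {s : ℝ} (hs : 0 < s) (a b c : ℂ) :
    Tendsto (qexp (-(s : ℂ)) a b c) atTop (nhds 0) := by
  have key : ∀ n : ℕ, Tendsto (fun t : ℝ => (t : ℂ) ^ n * Complex.exp (-(s : ℂ) * (t : ℂ)))
      atTop (nhds 0) := by
    intro n
    have h1 : Tendsto (fun t : ℝ => t ^ n * Real.exp (-s * t)) atTop (nhds 0) := by
      have := (isLittleO_pow_exp_pos_mul_atTop n hs).tendsto_div_nhds_zero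
      refine this.congr fun t => ?_
      rw [div_eq_mul_inv, ← Real.exp_neg]; ring_nf
    have h2 := (Complex.continuous_ofReal.tendsto 0).comp h1
    simpa [Function.comp_def] using h2
  have h := (((key 0).const_mul a).add ((key 1).const_mul b)).add ((key 2).const_mul c)
  convert h using 2
  · simp only [qexp]; ring
  · simp

lemma decay_solution {r : ℝ} (hr : 0 < r) (F : ℕ → ℝ → ℂ)
    (hF : ∀ n t, HasDerivAt (F n) (F (n + 1) t) t)
    (hode : ∀ t, 0 < t → F 6 t - 3 * (r : ℂ) ^ 2 * F 4 t + 3 * (r : ℂ) ^ 4 * F 2 t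
      - (r : ℂ) ^ 6 * F 0 t = 0)
    (hdec : Tendsto (F 0) atTop (nhds 0)) :
    ∃ a b c : ℂ, (∀ t, 0 < t → F 0 t = qexp (-(r : ℂ)) a b c t) ∧
      F 0 0 = a ∧ F 1 0 = b - r * a ∧ F 2 0 = 2 * c - 2 * r * b + r ^ 2 * a ∧
      F 3 0 = - 6 * r * c + 3 * r ^ 2 * b - r ^ 3 * a ∧
      F 4 0 = 12 * r ^ 2 * c - 4 * r ^ 3 * b + r ^ 4 * a := by
  set R : ℂ := (r : ℂ) with hR
  have hR0 : R ≠ 0 := by rw [hR]; exact_mod_cast hr.ne'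
  -- first integration
  let M : ℕ → ℝ → ℂ := fun n t => F (n + 3) t + 3 * R * F (n + 2) t + 3 * R ^ 2 * F (n + 1) t
    + R ^ 3 * F n t
  have hM : ∀ n t, HasDerivAt (M n) (M (n + 1) t) t := fun n t =>
    (((hF (n + 3) t).add ((hF (n + 2) t).const_mul _)).add ((hF (n + 1) t).const_mul _)).add
      ((hF n t).const_mul _)
  obtain ⟨b0, b1, b2, hb⟩ := quad_of_deriv
    (G0 := fun t => M 0 t * Complex.exp (-R * (t : ℂ)))
    (G1 := fun t => (M 1 t - R * M 0 t) * Complex.exp (-R * (t : ℂ)))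
    (G2 := fun t => (M 2 t - 2 * R * M 1 t + R ^ 2 * M 0 t) * Complex.exp (-R * (t : ℂ)))
    (G3 := fun t => (M 3 t - 3 * R * M 2 t + 3 * R ^ 2 * M 1 t - R ^ 3 * M 0 t)
      * Complex.exp (-R * (t : ℂ)))
    (fun t => by
      refine ((hM 0 t).mul (hasDerivAt_cexp_real (-R) t)).congr_deriv ?_
      ring)
    (fun t => by
      refine (((hM 1 t).sub ((hM 0 t).const_mul R)).mul (hasDerivAt_cexp_real (-R) t)).congr_deriv ?_
      simp
      ring)
    (fun t => by
      refine ((((hM 2 t).sub ((hM 1 t).const_mul (2 * R))).add ((hM 0 t).const_mul (R ^ 2))).mul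
        (hasDerivAt_cexp_real (-R) t)).congr_deriv ?_
      simp
      ring)
    (fun t ht => by
      have h := hode t ht
      have : M 3 t - 3 * R * M 2 t + 3 * R ^ 2 * M 1 t - R ^ 3 * M 0 t = 0 := by
        simp only [M, Nat.reduceAdd]
        linear_combination h
      rw [this, zero_mul])
  obtain ⟨β2, hβ2⟩ : ∃ x, 8 * R ^ 3 * x = b2 := ⟨b2 / (8 * R ^ 3), by field_simp⟩
  obtain ⟨β1, hβ1⟩ : ∃ x, 8 * R ^ 3 * x = b1 - 24 * R ^ 2 * β2 :=
    ⟨(b1 - 24 * R ^ 2 * β2) / (8 * R ^ 3), by field_simp⟩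
  obtain ⟨β0, hβ0⟩ : ∃ x, 8 * R ^ 3 * x = b0 - 12 * R ^ 2 * β1 - 12 * R * β2 :=
    ⟨(b0 - 12 * R ^ 2 * β1 - 12 * R * β2) / (8 * R ^ 3), by field_simp⟩
  -- second integration
  obtain ⟨a, b, c, habc⟩ := quad_of_deriv
    (G0 := fun t => F 0 t * Complex.exp (R * (t : ℂ)) - qexp (2 * R) β0 β1 β2 t)
    (G1 := fun t => (F 1 t + R * F 0 t) * Complex.exp (R * (t : ℂ))
      - qexp (2 * R) _ _ _ t)
    (G2 := fun t => (F 2 t + 2 * R * F 1 t + R ^ 2 * F 0 t) * Complex.exp (R * (t : ℂ))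
      - qexp (2 * R) _ _ _ t)
    (G3 := fun t => (F 3 t + 3 * R * F 2 t + 3 * R ^ 2 * F 1 t + R ^ 3 * F 0 t)
      * Complex.exp (R * (t : ℂ)) - qexp (2 * R) _ _ _ t)
    (fun t => by
      refine HasDerivAt.sub ?_ (hasDerivAt_qexp _ _ _ _ t)
      refine ((hF 0 t).mul (hasDerivAt_cexp_real R t)).congr_deriv ?_
      ring)
    (fun t => by
      refine HasDerivAt.sub ?_ (hasDerivAt_qexp _ _ _ _ t)
      refine (((hF 1 t).add ((hF 0 t).const_mul R)).mul (hasDerivAt_cexp_real R t)).congr_deriv ?_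
      simp
      ring)
    (fun t => by
      refine HasDerivAt.sub ?_ (hasDerivAt_qexp _ _ _ _ t)
      refine ((((hF 2 t).add ((hF 1 t).const_mul (2 * R))).add ((hF 0 t).const_mul (R ^ 2))).mul
        (hasDerivAt_cexp_real R t)).congr_deriv ?_
      simp
      ring)
    (fun t ht => by
      have h := hb t ht
      have e1 : Complex.exp (2 * R * (t : ℂ))
          = Complex.exp (R * (t : ℂ)) * Complex.exp (R * (t : ℂ)) := by
        rw [← Complex.exp_add]; ring_nf
      have e2 : Complex.exp (-R * (t : ℂ)) * Complex.exp (R * (t : ℂ)) = 1 := by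
        rw [← Complex.exp_add]; simp
      simp only [M, Nat.reduceAdd] at h
      simp only [qexp, e1]
      set E := Complex.exp (R * (t : ℂ))
      set E' := Complex.exp (-R * (t : ℂ))
      set T := (t : ℂ)
      linear_combination E ^ 2 * h - E * (F 3 t + 3 * R * F 2 t + 3 * R ^ 2 * F 1 t
        + R ^ 3 * F 0 t) * e2 - E ^ 2 * hβ0 - E ^ 2 * T * hβ1 - E ^ 2 * T ^ 2 * hβ2)
  -- the growing part vanishes
  have hform : ∀ t : ℝ, 0 < t → β0 + β1 * (t : ℂ) + β2 * (t : ℂ) ^ 2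
      = F 0 t * qexp (-R) 1 0 0 t - qexp (-((2 * r : ℝ) : ℂ)) a b c t := by
    intro t ht
    have h := habc t ht
    have e1 : Complex.exp (2 * R * (t : ℂ))
        = Complex.exp (R * (t : ℂ)) * Complex.exp (R * (t : ℂ)) := by
      rw [← Complex.exp_add]; ring_nf
    have e3 : Complex.exp (-((2 * r : ℝ) : ℂ) * (t : ℂ))
        = Complex.exp (-R * (t : ℂ)) * Complex.exp (-R * (t : ℂ)) := by
      rw [← Complex.exp_add, hR]; push_cast; ring_nf
    have e2 : Complex.exp (-R * (t : ℂ)) * Complex.exp (R * (t : ℂ)) = 1 := by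
      rw [← Complex.exp_add]; simp
    simp only [qexp, e1] at h
    simp only [qexp, e3]
    set E := Complex.exp (R * (t : ℂ))
    set E' := Complex.exp (-R * (t : ℂ))
    set T := (t : ℂ)
    linear_combination (-E' ^ 2) * h + (E' * F 0 t
      - (β0 + β1 * T + β2 * T ^ 2) * (E' * E + 1)) * e2
  have hβ : β0 = 0 ∧ β1 = 0 ∧ β2 = 0 := by
    apply quad_zero_of_tendsto
    have h1 := (hdec.mul (qexp_tendsto hr 1 0 0)).sub
      (qexp_tendsto (s := 2 * r) (by positivity) a b c)
    simp only [mul_zero, sub_zero] at h1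
    refine h1.congr' ?_
    filter_upwards [eventually_gt_atTop 0] with t ht using (hform t ht).symm
  obtain ⟨rfl, rfl, rfl⟩ := hβ
  have h0 : ∀ t, 0 < t → F 0 t = qexp (-R) a b c t := by
    intro t ht
    have h := habc t ht
    have e2 : Complex.exp (-R * (t : ℂ)) * Complex.exp (R * (t : ℂ)) = 1 := by
      rw [← Complex.exp_add]; simp
    simp only [qexp] at h ⊢
    linear_combination Complex.exp (-R * (t : ℂ)) * h - F 0 t * e2
  have step : ∀ (n : ℕ) (a b c : ℂ), (∀ t, 0 < t → F n t = qexp (-R) a b c t) →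
      (∀ t, 0 < t → F (n + 1) t = qexp (-R) (b + -R * a) (2 * c + -R * b) (-R * c) t) := by
    intro n a b c h t ht
    exact sub_eq_zero.1 (deriv_zero_pos (fun t => (hF n t).sub (hasDerivAt_qexp (-R) a b c t))
      (fun t ht => sub_eq_zero.2 (h t ht)) t ht)
  have at0 : ∀ (n : ℕ) (a b c : ℂ), (∀ t, 0 < t → F n t = qexp (-R) a b c t) → F n 0 = a := by
    intro n a b c h
    have hcont : Continuous (fun t => F n t - qexp (-R) a b c t) :=
      continuous_iff_continuousAt.2 fun t =>
        ((hF n t).sub (hasDerivAt_qexp (-R) a b c t)).continuousAt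
    have := zero_at_zero hcont (fun t ht => sub_eq_zero.2 (h t ht))
    simpa [qexp, sub_eq_zero] using this
  have h1 := step _ _ _ _ h0
  have h2 := step _ _ _ _ h1
  have h3 := step _ _ _ _ h2
  have h4 := step _ _ _ _ h3
  refine ⟨a, b, c, h0, at0 _ _ _ _ h0, ?_, ?_, ?_, ?_⟩
  · rw [at0 _ _ _ _ h1]; ring
  · rw [at0 _ _ _ _ h2]; ring
  · rw [at0 _ _ _ _ h3]; ring
  · rw [at0 _ _ _ _ h4]; ring

lemma iter_chain {f : ℝ → ℂ} (hf : ContDiff ℝ (⊤ : ℕ∞) f) (n : ℕ) (t : ℝ) :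
    HasDerivAt (iteratedDeriv n f) (iteratedDeriv (n + 1) f t) t := by
  rw [iteratedDeriv_succ]
  exact ((hf.differentiable_iteratedDeriv n (by exact_mod_cast WithTop.coe_lt_top n)) t).hasDerivAt

/-- biharmonic decaying solutions with zero Dirichlet and second-derivative data vanish -/
lemma biharm_zero {r : ℝ} (hr : 0 < r) (F : ℕ → ℝ → ℂ)
    (hF : ∀ n t, HasDerivAt (F n) (F (n + 1) t) t)
    (hode : ∀ t, 0 < t → F 4 t - 2 * (r : ℂ) ^ 2 * F 2 t + (r : ℂ) ^ 4 * F 0 t = 0)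
    (hdec : Tendsto (F 0) atTop (nhds 0)) (h0 : F 0 0 = 0) (h2 : F 2 0 = 0) :
    ∀ t, 0 < t → F 0 t = 0 := by
  have hR0 : (r : ℂ) ≠ 0 := by exact_mod_cast hr.ne'
  have hc : ∀ n, Continuous (F n) := fun n =>
    continuous_iff_continuousAt.2 fun t => (hF n t).continuousAt
  have d1 := deriv_zero_pos (fun t => ((hF 4 t).sub ((hF 2 t).const_mul (2 * (r : ℂ) ^ 2))).add
    ((hF 0 t).const_mul ((r : ℂ) ^ 4))) hode
  have d2 := deriv_zero_pos (fun t => ((hF 5 t).sub ((hF 3 t).const_mul (2 * (r : ℂ) ^ 2))).add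
    ((hF 1 t).const_mul ((r : ℂ) ^ 4))) d1
  have e0 := zero_at_zero (G := fun t => F 4 t - 2 * (r : ℂ) ^ 2 * F 2 t + (r : ℂ) ^ 4 * F 0 t)
    (((hc 4).sub ((hc 2).const_mul _)).add ((hc 0).const_mul _)) hode
  obtain ⟨a, b, c, hs, g0, g1, g2, g3, g4⟩ := decay_solution hr F hF (fun t ht => by
    have x := d2 t ht
    simp only [Nat.reduceAdd] at x
    linear_combination x - (r : ℂ) ^ 2 * hode t ht) hdec
  have ha : a = 0 := by rw [← g0, h0]
  subst ha
  have hcc : c = 0 := by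
    have : 8 * (r : ℂ) ^ 2 * c = 0 := by
      rw [g4, g2, h0] at e0
      linear_combination e0
    simpa [hR0] using this
  subst hcc
  have hb : b = 0 := by
    have : 2 * (r : ℂ) * b = 0 := by
      rw [h2] at g2
      linear_combination g2
    simpa [hR0] using this
  subst hb
  intro t ht
  rw [hs t ht]; simp [qexp]

/-- The Lopatinskii–Shapiro covering condition for the Dirichlet–wall-eddy problem:
let `η ∈ ℝ²` be nonzero, `r = |η|`, `γ ∈ ℝ`, and suppose `u : ℝ → ℂ³`, `p : ℝ → ℂ`
are infinitely differentiable and satisfy for all `t > 0`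
`uⱼ'''' − 2r²uⱼ'' + r⁴uⱼ + iηⱼp = 0` (`j = 1,2`),
`u₃'''' − 2r²u₃'' + r⁴u₃ + p' = 0`, `u₃' + iη₁u₁ + iη₂u₂ = 0`,
together with the boundary conditions `u(0) = 0`,
`u₂''(0) − iη₂u₃'(0) + γη₁(η₂u₁(0) − η₁u₂(0)) = 0`,
`u₁''(0) − iη₁u₃'(0) + γη₂(η₂u₁(0) − η₁u₂(0)) = 0`.
If `u(t) → 0` and `p(t) → 0` as `t → +∞`, then `u ≡ 0` and `p ≡ 0` on `[0,∞)`
(indices 0-based). -/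
theorem stmt18 (η : EuclideanSpace ℝ (Fin 2)) (hη : η ≠ 0) (γ : ℝ)
    (u : ℝ → Fin 3 → ℂ) (p : ℝ → ℂ)
    (hu : ∀ i : Fin 3, ContDiff ℝ (⊤ : ℕ∞) (fun t => u t i))
    (hp : ContDiff ℝ (⊤ : ℕ∞) p)
    (heq0 : ∀ t : ℝ, 0 < t →
      iteratedDeriv 4 (fun s => u s 0) t
        - 2 * (‖η‖ : ℂ)^2 * iteratedDeriv 2 (fun s => u s 0) t
        + (‖η‖ : ℂ)^4 * u t 0 + Complex.I * (η 0 : ℂ) * p t = 0)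
    (heq1 : ∀ t : ℝ, 0 < t →
      iteratedDeriv 4 (fun s => u s 1) t
        - 2 * (‖η‖ : ℂ)^2 * iteratedDeriv 2 (fun s => u s 1) t
        + (‖η‖ : ℂ)^4 * u t 1 + Complex.I * (η 1 : ℂ) * p t = 0)
    (heq2 : ∀ t : ℝ, 0 < t →
      iteratedDeriv 4 (fun s => u s 2) t
        - 2 * (‖η‖ : ℂ)^2 * iteratedDeriv 2 (fun s => u s 2) t
        + (‖η‖ : ℂ)^4 * u t 2 + deriv p t = 0)
    (hdiv : ∀ t : ℝ, 0 < t →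
      deriv (fun s => u s 2) t
        + Complex.I * (η 0 : ℂ) * u t 0 + Complex.I * (η 1 : ℂ) * u t 1 = 0)
    (hbc0 : u 0 0 = 0) (hbc1 : u 0 1 = 0) (hbc2 : u 0 2 = 0)
    (hwe1 : iteratedDeriv 2 (fun s => u s 1) 0
        - Complex.I * (η 1 : ℂ) * deriv (fun s => u s 2) 0
        + (γ : ℂ) * (η 0 : ℂ) * ((η 1 : ℂ) * u 0 0 - (η 0 : ℂ) * u 0 1) = 0)
    (hwe2 : iteratedDeriv 2 (fun s => u s 0) 0
        - Complex.I * (η 0 : ℂ) * deriv (fun s => u s 2) 0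
        + (γ : ℂ) * (η 1 : ℂ) * ((η 1 : ℂ) * u 0 0 - (η 0 : ℂ) * u 0 1) = 0)
    (hudecay : ∀ i : Fin 3, Tendsto (fun t => u t i) atTop (nhds 0))
    (hpdecay : Tendsto p atTop (nhds 0)) :
    ∀ t : ℝ, 0 ≤ t → (∀ i : Fin 3, u t i = 0) ∧ p t = 0 := by
  have hr : 0 < ‖η‖ := norm_pos_iff.2 hη
  have hR0 : (‖η‖ : ℂ) ≠ 0 := by exact_mod_cast hr.ne'
  have hn : (‖η‖ : ℂ) ^ 2 = (η 0 : ℂ) ^ 2 + (η 1 : ℂ) ^ 2 := by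
    have := EuclideanSpace.real_norm_sq_eq η
    rw [Fin.sum_univ_two] at this
    exact_mod_cast this
  generalize ‖η‖ = r at *
  obtain ⟨U, hU⟩ : ∃ U : ℕ → ℝ → ℂ, U = fun n => iteratedDeriv n (fun s => u s 0) := ⟨_, rfl⟩
  obtain ⟨V, hV⟩ : ∃ U : ℕ → ℝ → ℂ, U = fun n => iteratedDeriv n (fun s => u s 1) := ⟨_, rfl⟩
  obtain ⟨W, hW⟩ : ∃ U : ℕ → ℝ → ℂ, U = fun n => iteratedDeriv n (fun s => u s 2) := ⟨_, rfl⟩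
  obtain ⟨P, hP⟩ : ∃ U : ℕ → ℝ → ℂ, U = fun n => iteratedDeriv n p := ⟨_, rfl⟩
  have cU : ∀ n t, HasDerivAt (U n) (U (n + 1) t) t := by
    intro n t; rw [hU]; exact iter_chain (hu 0) n t
  have cV : ∀ n t, HasDerivAt (V n) (V (n + 1) t) t := by
    intro n t; rw [hV]; exact iter_chain (hu 1) n t
  have cW : ∀ n t, HasDerivAt (W n) (W (n + 1) t) t := by
    intro n t; rw [hW]; exact iter_chain (hu 2) n t
  have cP : ∀ n t, HasDerivAt (P n) (P (n + 1) t) t := by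
    intro n t; rw [hP]; exact iter_chain hp n t
  have U0 : ∀ t, u t 0 = U 0 t := fun t => by simp [hU]
  have V0 : ∀ t, u t 1 = V 0 t := fun t => by simp [hV]
  have W0 : ∀ t, u t 2 = W 0 t := fun t => by simp [hW]
  have P0 : ∀ t, p t = P 0 t := fun t => by simp [hP]
  have W1 : ∀ t, deriv (fun s => u s 2) t = W 1 t := fun t => by simp [hW, iteratedDeriv_one]
  have P1 : ∀ t, deriv p t = P 1 t := fun t => by simp [hP, iteratedDeriv_one]
  have Un : ∀ n t, iteratedDeriv n (fun s => u s 0) t = U n t := fun n t => by rw [hU]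
  have Vn : ∀ n t, iteratedDeriv n (fun s => u s 1) t = V n t := fun n t => by rw [hV]
  have Wn : ∀ n t, iteratedDeriv n (fun s => u s 2) t = W n t := fun n t => by rw [hW]
  have tU : Tendsto (U 0) atTop (nhds 0) := (hudecay 0).congr U0
  have tV : Tendsto (V 0) atTop (nhds 0) := (hudecay 1).congr V0
  have tW : Tendsto (W 0) atTop (nhds 0) := (hudecay 2).congr W0
  have tP : Tendsto (P 0) atTop (nhds 0) := hpdecay.congr P0
  simp only [Un, Vn, Wn, W1, P1] at heq0 heq1 heq2 hdiv hwe1 hwe2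
  simp only [U0, V0, W0, P0] at heq0 heq1 heq2 hdiv hwe1 hwe2 hbc0 hbc1 hbc2
  clear hU hV hW hP Un Vn Wn W1 P1
  have divn : ∀ n t, 0 < t → W (n + 1) t + Complex.I * (η 0 : ℂ) * U n t
      + Complex.I * (η 1 : ℂ) * V n t = 0 := by
    intro n
    induction n with
    | zero => exact hdiv
    | succ n ih =>
      exact deriv_zero_pos (fun t => ((cW (n + 1) t).add ((cU n t).const_mul _)).add
        ((cV n t).const_mul _)) ih
  have cont : ∀ {F : ℕ → ℝ → ℂ}, (∀ n t, HasDerivAt (F n) (F (n + 1) t) t) →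
      ∀ n, Continuous (F n) := fun hF n =>
    continuous_iff_continuousAt.2 fun t => (hF n t).continuousAt
  have div0 : ∀ n, W (n + 1) 0 + Complex.I * (η 0 : ℂ) * U n 0
      + Complex.I * (η 1 : ℂ) * V n 0 = 0 := fun n =>
    zero_at_zero (G := fun t => W (n + 1) t + Complex.I * (η 0 : ℂ) * U n t
      + Complex.I * (η 1 : ℂ) * V n t)
      (((cont cW _).add ((cont cU n).const_mul _)).add ((cont cV n).const_mul _)) (divn n)
  have w1 : W 1 0 = 0 := by
    have := div0 0
    rw [hbc0, hbc1] at this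
    simpa using this
  have u2 : U 2 0 = 0 := by simpa [w1, hbc0, hbc1] using hwe2
  have v2 : V 2 0 = 0 := by simpa [w1, hbc0, hbc1] using hwe1
  have w3 : W 3 0 = 0 := by
    have := div0 2
    rw [u2, v2] at this
    simpa using this
  have q1 := deriv_zero_pos (fun t => (((cW 4 t).sub ((cW 2 t).const_mul (2 * (r : ℂ) ^ 2))).add
    ((cW 0 t).const_mul ((r : ℂ) ^ 4))).add (cP 1 t)) heq2
  have q2 := deriv_zero_pos (fun t => (((cW 5 t).sub ((cW 3 t).const_mul (2 * (r : ℂ) ^ 2))).add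
    ((cW 1 t).const_mul ((r : ℂ) ^ 4))).add (cP 2 t)) q1
  simp only [Nat.reduceAdd] at q1 q2
  have p2 : ∀ t, 0 < t → P 2 t - (r : ℂ) ^ 2 * P 0 t = 0 := by
    intro t ht
    have a0 := divn 0 t ht
    have a2 := divn 2 t ht
    have a4 := divn 4 t ht
    simp only [Nat.reduceAdd] at a0 a2 a4
    linear_combination q1 t ht + Complex.I * (η 0 : ℂ) * heq0 t ht
      + Complex.I * (η 1 : ℂ) * heq1 t ht - a4 + 2 * (r : ℂ) ^ 2 * a2 - (r : ℂ) ^ 4 * a0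
      - P 0 t * hn - ((η 0 : ℂ) ^ 2 + (η 1 : ℂ) ^ 2) * P 0 t * Complex.I_sq
  have p3 := deriv_zero_pos (fun t => (cP 2 t).sub ((cP 0 t).const_mul ((r : ℂ) ^ 2))) p2
  simp only [Nat.reduceAdd] at p3
  have hWz : ∀ t, 0 < t → W 0 t = 0 := by
    obtain ⟨a, b, c, hs, g0, g1, g2, g3, g4⟩ := decay_solution hr W cW (fun t ht => by
      have x := p3 t ht
      linear_combination q2 t ht - (r : ℂ) ^ 2 * heq2 t ht - x) tW
    have ha : a = 0 := by rw [← g0, hbc2]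
    subst ha
    have hb : b = 0 := by
      rw [w1] at g1
      linear_combination -g1
    subst hb
    have hcc : c = 0 := by
      have : 6 * (r : ℂ) * c = 0 := by
        rw [w3] at g3
        linear_combination g3
      simpa [hR0] using this
    subst hcc
    intro t ht
    rw [hs t ht]; simp [qexp]
  have z1 := deriv_zero_pos (cW 0) hWz
  have z2 := deriv_zero_pos (cW 1) z1
  have z3 := deriv_zero_pos (cW 2) z2
  have z4 := deriv_zero_pos (cW 3) z3
  have hPz : ∀ t, 0 < t → P 0 t = 0 := by
    obtain ⟨c, hc⟩ := const_of_deriv (cP 0) (fun t ht => by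
      have := heq2 t ht
      simp only [Nat.reduceAdd] at z2 z4
      simpa [hWz t ht, z2 t ht, z4 t ht] using this)
    have : Tendsto (P 0) atTop (nhds c) := by
      refine tendsto_const_nhds.congr' ?_
      filter_upwards [eventually_gt_atTop 0] with t ht using (hc t ht).symm
    have := tendsto_nhds_unique tP this
    intro t ht
    rw [hc t ht, this]
  have hUz := biharm_zero hr U cU (fun t ht => by
    simpa [hPz t ht] using heq0 t ht) tU hbc0 u2
  have hVz := biharm_zero hr V cV (fun t ht => by
    simpa [hPz t ht] using heq1 t ht) tV hbc1 v2
  have hP00 := zero_at_zero (cont cP 0) hPz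
  intro t ht
  rcases ht.eq_or_lt with rfl | ht
  · refine ⟨fun i => ?_, by rw [P0, hP00]⟩
    fin_cases i
    · exact (U0 0).trans hbc0
    · exact (V0 0).trans hbc1
    · exact (W0 0).trans hbc2
  · refine ⟨fun i => ?_, by rw [P0, hPz t ht]⟩
    fin_cases i
    · exact (U0 t).trans (hUz t ht)
    · exact (V0 t).trans (hVz t ht)
    · exact (W0 t).trans (hWz t ht)
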